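/- Let (u_ε, m_ε, H̄_ε) ∈ C^∞(𝕋^d)×C^∞(𝕋^d)×ℝ, with m_ε > 0, solve the oscillating mean-field game system: (1/2)|P+∇u_ε(x)|² + V(x, x/ε) = ln(m_ε(x)) + H̄_ε(P) and −div(m_ε(x)(P+∇u_ε(x))) = 0 in 𝕋^d, with ∫_{𝕋^d} u_ε dx = 0 and ∫_{𝕋^d} m_ε dx = 1. Let q ∈ [1,∞). Then there exist positive constants C = C(P), C_q = C(q,P) and C_ε = C(ε,P) such that: sup_ε ‖u_ε‖_{W^{1,q}(𝕋^d)} ≤ C_q; 1/C ≤ inf_{𝕋^d} m_ε ≤ sup_{𝕋^d} m_ε ≤ C_ε; and sup_ε ∫_{𝕋^d} m_ε(x) ln(m_ε(x)) dx ≤ |P|²/2 + sup_{(x,y)∈𝕋^d×𝒴^d} V(x,y) − inf_{(x,y)∈𝕋^d×𝒴^d} V(x,y). -/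

import Mathlib

open MeasureTheory Filter Topology Function

noncomputable section

/-- The unit cell `𝒴^d = [0,1)^d`. -/
def cube (d : ℕ) : Set (Fin d → ℝ) := Set.univ.pi fun _ => Set.Ico (0 : ℝ) 1

/-- `ℤ^d`-periodicity of a function on `ℝ^d`; functions on the torus `𝕋^d`
(and `𝒴^d`-periodic functions) are identified with such functions. -/
def ZPer {d : ℕ} (f : (Fin d → ℝ) → ℝ) : Prop :=
  ∀ (x : Fin d → ℝ) (k : Fin d → ℤ), f (fun i => x i + (k i : ℝ)) = f x

/-- The `i`-th partial derivative. -/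
def pder {d : ℕ} (i : Fin d) (f : (Fin d → ℝ) → ℝ) (x : Fin d → ℝ) : ℝ :=
  fderiv ℝ f x (Pi.single i 1)

/-- `V : 𝕋^d × ℝ^d → ℝ` smooth, `𝒴^d`-periodic in the second variable
(and periodic in the first, i.e. defined on the torus). -/
def SmoothV {d : ℕ} (V : (Fin d → ℝ) → (Fin d → ℝ) → ℝ) : Prop :=
  ContDiff ℝ (⊤ : ℕ∞) (uncurry V) ∧ (∀ y, ZPer fun x => V x y) ∧ (∀ x, ZPer (V x))

/-- `sup_{(x,y) ∈ 𝕋^d × 𝒴^d} V (x,y)` (by periodicity, the sup over all of `ℝ^d × ℝ^d`). -/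
def supV {d : ℕ} (V : (Fin d → ℝ) → (Fin d → ℝ) → ℝ) : ℝ :=
  ⨆ q : (Fin d → ℝ) × (Fin d → ℝ), V q.1 q.2

/-- `inf_{(x,y) ∈ 𝕋^d × 𝒴^d} V (x,y)`. -/
def infV {d : ℕ} (V : (Fin d → ℝ) → (Fin d → ℝ) → ℝ) : ℝ :=
  ⨅ q : (Fin d → ℝ) × (Fin d → ℝ), V q.1 q.2

/-- `(u, m, H)` is a (smooth, positive, normalized) solution of the `ε`-oscillating
MFG system of Problem 1:
`|P+∇u|²/2 + V(x,x/ε) = ln m + H`, `-div(m (P+∇u)) = 0`, `∫ u = 0`, `∫ m = 1`. -/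
def SolvesMFG {d : ℕ} (P : Fin d → ℝ) (V : (Fin d → ℝ) → (Fin d → ℝ) → ℝ)
    (ε : ℝ) (u m : (Fin d → ℝ) → ℝ) (H : ℝ) : Prop :=
  ContDiff ℝ (⊤ : ℕ∞) u ∧ ZPer u ∧ ContDiff ℝ (⊤ : ℕ∞) m ∧ ZPer m ∧ (∀ x, 0 < m x) ∧
  (∀ x, (∑ i, (P i + pder i u x) ^ 2) / 2 + V x (ε⁻¹ • x) = Real.log (m x) + H) ∧
  (∀ x, (∑ i, pder i (fun z => m z * (P i + pder i u z)) x) = 0) ∧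
  (∫ x in cube d, u x) = 0 ∧ (∫ x in cube d, m x) = 1

/-!
Testing the continuity equation with `u` gives `∫ m (P + ∇u) · ∇u = 0`, hence the energy bound
`∫ m |P + ∇u|² / 2 ≤ |P|² / 2`. Multiplying the Hamilton–Jacobi equation by `m` turns this into
`∫ m log m ≤ |P|² / 2 + sup V - H`, where `H ≥ inf V` because `∫ log m ≤ 0`; conversely
`∫ m log m ≥ 0` gives `H ≤ |P|² / 2 + sup V`. With `H` bounded above, the Hamilton–Jacobi equation
controls `exp (|P + ∇u|² / 2)` pointwise by a constant times `m`, which has unit mass. So `m` is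
bounded below and `exp |∇u|` is bounded in `L¹`. A Poincaré inequality for convex functions moves
the exponential bound from `∇u` to `u`, and `exp` dominates every power.
-/

lemma measurableSet_cube (d : ℕ) : MeasurableSet (cube d) :=
  MeasurableSet.univ_pi fun _ => measurableSet_Ico

lemma cube_subset_Icc (d : ℕ) : cube d ⊆ Set.Icc 0 1 := fun _ hx =>
  ⟨fun i => (hx i trivial).1, fun i => (hx i trivial).2.le⟩

instance isProbabilityMeasure_restrict_cube (d : ℕ) :
    IsProbabilityMeasure (volume.restrict (cube d)) :=
  ⟨by simp [cube, volume_pi_pi]⟩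

instance isProbabilityMeasure_restrict_Ioc_zero_one :
    IsProbabilityMeasure (volume.restrict (Set.Ioc (0 : ℝ) 1)) :=
  ⟨by simp⟩

lemma integrableOn_cube {d : ℕ} {f : (Fin d → ℝ) → ℝ} (hf : Continuous f) :
    IntegrableOn f (cube d) :=
  (hf.continuousOn.integrableOn_compact isCompact_Icc).mono_set (cube_subset_Icc d)

lemma exists_mem_Icc_add_intCast_eq {d : ℕ} (x : Fin d → ℝ) :
    ∃ y ∈ Set.Icc (0 : Fin d → ℝ) 1, ∃ k : Fin d → ℤ, (fun i => y i + (k i : ℝ)) = x :=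
  ⟨fun i => Int.fract (x i),
    ⟨fun i => Int.fract_nonneg (x i), fun i => (Int.fract_lt_one (x i)).le⟩,
    fun i => ⌊x i⌋, funext fun i => Int.fract_add_floor (x i)⟩

lemma pder_mul {d : ℕ} {f g : (Fin d → ℝ) → ℝ} {x : Fin d → ℝ} (i : Fin d)
    (hf : DifferentiableAt ℝ f x) (hg : DifferentiableAt ℝ g x) :
    pder i (fun z => f z * g z) x = f x * pder i g x + g x * pder i f x := by
  simp [pder, fderiv_fun_mul hf hg]

lemma contDiff_pder {d : ℕ} {f : (Fin d → ℝ) → ℝ} {k n : WithTop ℕ∞} (hf : ContDiff ℝ n f)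
    (hkn : k + 1 ≤ n) (i : Fin d) : ContDiff ℝ k (pder i f) :=
  (hf.fderiv_right hkn).clm_apply contDiff_const

lemma continuous_pder {d : ℕ} {f : (Fin d → ℝ) → ℝ} (hf : ContDiff ℝ 1 f) (i : Fin d) :
    Continuous (pder i f) :=
  (contDiff_pder (k := 0) hf (zero_add 1).le i).continuous

lemma fderiv_apply_eq_sum_mul_pder {d : ℕ} (f : (Fin d → ℝ) → ℝ) (x z : Fin d → ℝ) :
    fderiv ℝ f x z = ∑ i, z i * pder i f x := by
  have hz (i : Fin d) : Pi.single i (z i) = z i • (Pi.single i 1 : Fin d → ℝ) := by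
    rw [← Pi.single_smul, smul_eq_mul, mul_one]
  conv_lhs => rw [← Finset.univ_sum_single z]
  simp only [hz, map_sum, map_smul, smul_eq_mul, pder]

lemma integral_fderiv_segment {E : Type*} [NormedAddCommGroup E] [NormedSpace ℝ E]
    {f : E → ℝ} (hf : ContDiff ℝ 1 f) (x z : E) :
    ∫ t in Set.Ioc (0 : ℝ) 1, fderiv ℝ f (x + t • z) z = f (x + z) - f x := by
  have hderiv (t : ℝ) :
      HasDerivAt (fun s : ℝ => f (x + s • z)) (fderiv ℝ f (x + t • z) z) t := by
    have hline : HasDerivAt (fun s : ℝ => x + s • z) z t := by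
      simpa using ((hasDerivAt_id t).smul_const z).const_add x
    exact (hf.differentiable_one _).hasFDerivAt.comp_hasDerivAt t hline
  have hcont : Continuous fun t : ℝ => fderiv ℝ f (x + t • z) z := by
    have := hf.continuous_fderiv one_ne_zero
    fun_prop
  rw [← intervalIntegral.integral_of_le zero_le_one,
    intervalIntegral.integral_eq_sub_of_hasDerivAt (fun t _ => hderiv t)
      (hcont.intervalIntegrable 0 1)]
  simp

namespace ZPer

variable {d : ℕ} {f : (Fin d → ℝ) → ℝ}

lemma exists_abs_le (hf : ZPer f) (hc : Continuous f) : ∃ C, ∀ x, |f x| ≤ C := by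
  obtain ⟨C, hC⟩ := (isCompact_Icc (a := (0 : Fin d → ℝ)) (b := 1)).exists_bound_of_continuousOn
    hc.continuousOn
  refine ⟨C, fun x => ?_⟩
  obtain ⟨y, hy, k, rfl⟩ := exists_mem_Icc_add_intCast_eq x
  exact (congrArg abs (hf y k)).trans_le (hC y hy)

lemma comp_sum {ι : Type*} {s : Finset ι} {F : ι → (Fin d → ℝ) → ℝ} (hF : ∀ i, ZPer (F i))
    (φ : ℝ → ℝ) : ZPer fun x => ∑ i ∈ s, φ (F i x) := fun x k =>
  Finset.sum_congr rfl fun i _ => congrArg φ (hF i x k)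

protected lemma pder (hf : ZPer f) (i : Fin d) : ZPer (pder i f) := fun x k => by
  have hshift : (fun y => f (y + fun j => (k j : ℝ))) = f := funext fun y => hf y k
  have := fderiv_comp_add_right (𝕜 := ℝ) (f := f) (x := x) fun j => (k j : ℝ)
  rw [hshift] at this
  exact congrArg (fun L => L (Pi.single i 1)) this.symm

lemma apply_add_single_one (hf : ZPer f) (x : Fin d → ℝ) (i : Fin d) :
    f (x + Pi.single i 1) = f x := by
  rw [← hf x (Pi.single i 1)]
  congr 1
  ext j
  simp [Pi.single_apply, apply_ite ((↑) : ℤ → ℝ)]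

lemma apply_vadd_span (hf : ZPer f)
    (g : (Submodule.span ℤ (Set.range (Pi.basisFun ℝ (Fin d)))).toAddSubgroup)
    (x : Fin d → ℝ) : f (g +ᵥ x) = f x := by
  obtain ⟨g, hg⟩ := g
  obtain ⟨k, rfl⟩ := Submodule.mem_span_range_iff_exists_fun ℤ |>.1 hg
  rw [← hf x k]
  congr 1
  ext i
  simp [AddSubgroup.vadd_def, Finset.sum_apply, Pi.single_apply, add_comm]

-- The translated cube is another fundamental domain of the lattice `ℤ^d`.
lemma setIntegral_cube_add (hf : ZPer f) (v : Fin d → ℝ) :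
    ∫ x in cube d, f (x + v) = ∫ x in cube d, f x := by
  have : Countable (Submodule.span ℤ (Set.range (Pi.basisFun ℝ (Fin d)))).toAddSubgroup :=
    inferInstanceAs (Countable (Submodule.span ℤ (Set.range (Pi.basisFun ℝ (Fin d)))))
  have hcube := ZSpan.isAddFundamentalDomain' (Pi.basisFun ℝ (Fin d)) volume
  rw [ZSpan.fundamentalDomain_pi_basisFun, ← cube] at hcube
  rw [← (hcube.vadd_of_comm v).setIntegral_eq hcube hf.apply_vadd_span, ← Set.image_vadd,
    (measurePreserving_vadd v volume).setIntegral_image_emb (measurableEmbedding_const_vadd v)]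
  simp only [vadd_eq_add, add_comm]

section Average

variable {α : Type*} [MeasurableSpace α] {μ : Measure α} {φ : α → Fin d → ℝ}

lemma integrable_comp [IsFiniteMeasure μ] (hf : ZPer f) (hc : Continuous f)
    (hφ : Measurable φ) : Integrable (fun p => f (φ p)) μ := by
  obtain ⟨C, hC⟩ := hf.exists_abs_le hc
  exact .of_bound (hc.measurable.comp hφ).aestronglyMeasurable C (.of_forall fun p => hC (φ p))

lemma integrable_prod_add [IsFiniteMeasure μ] (hf : ZPer f) (hc : Continuous f)
    (hφ : Measurable φ) :
    Integrable (uncurry fun x p => f (x + φ p)) ((volume.restrict (cube d)).prod μ) :=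
  hf.integrable_comp hc (φ := fun q : (Fin d → ℝ) × α => q.1 + φ q.2) (by fun_prop)

lemma setIntegral_cube_integral_add [IsProbabilityMeasure μ] (hf : ZPer f) (hc : Continuous f)
    (hφ : Measurable φ) :
    ∫ x in cube d, ∫ p, f (x + φ p) ∂μ = ∫ x in cube d, f x := by
  rw [integral_integral_swap (hf.integrable_prod_add hc hφ)]
  simp [hf.setIntegral_cube_add]

-- Jensen's inequality at each point, then translation invariance.
lemma integral_convex_le_of_le_integral_add [IsProbabilityMeasure μ] (hf : ZPer f)
    (hc : Continuous f) (hf_nonneg : ∀ x, 0 ≤ f x) (hφ : Measurable φ) {g : ℝ → ℝ}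
    (hg : ConvexOn ℝ (Set.Ici 0) g) (hgc : ContinuousOn g (Set.Ici 0))
    (hgm : MonotoneOn g (Set.Ici 0)) {v : (Fin d → ℝ) → ℝ} (hvc : Continuous v)
    (hv_nonneg : ∀ x, 0 ≤ v x) (hv : ∀ x, v x ≤ ∫ p, f (x + φ p) ∂μ) :
    ∫ x in cube d, g (v x) ≤ ∫ x in cube d, g (f x) := by
  have hgf : ZPer fun x => g (f x) := fun x k => congrArg g (hf x k)
  have hgfc : Continuous fun x => g (f x) := hgc.comp_continuous hc hf_nonneg
  have hgvc : Continuous fun x => g (v x) := hgc.comp_continuous hvc hv_nonneg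
  have hjensen (x : Fin d → ℝ) : g (v x) ≤ ∫ p, g (f (x + φ p)) ∂μ :=
    calc g (v x) ≤ g (∫ p, f (x + φ p) ∂μ) :=
          hgm (hv_nonneg x) ((hv_nonneg x).trans (hv x)) (hv x)
      _ ≤ ∫ p, g (f (x + φ p)) ∂μ :=
          hg.map_integral_le hgc isClosed_Ici (.of_forall fun p => hf_nonneg _)
            (hf.integrable_comp hc (hφ.const_add x)) (hgf.integrable_comp hgfc (hφ.const_add x))
  calc ∫ x in cube d, g (v x) ≤ ∫ x in cube d, ∫ p, g (f (x + φ p)) ∂μ :=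
        integral_mono (integrableOn_cube hgvc)
          (hgf.integrable_prod_add hgfc hφ).integral_prod_left hjensen
    _ = ∫ x in cube d, g (f x) := hgf.setIntegral_cube_integral_add hgfc hφ

end Average

lemma integral_pder_eq_zero (hf : ZPer f) (hd : ContDiff ℝ 1 f) (i : Fin d) :
    ∫ x in cube d, pder i f x = 0 := by
  have hline (x : Fin d → ℝ) :
      ∫ t in Set.Ioc (0 : ℝ) 1, pder i f (x + t • Pi.single i 1) = 0 :=
    (integral_fderiv_segment hd x (Pi.single i 1)).trans
      (sub_eq_zero.2 (hf.apply_add_single_one x i))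
  rw [← (hf.pder i).setIntegral_cube_integral_add (continuous_pder hd i)
    (μ := volume.restrict (Set.Ioc (0 : ℝ) 1)) (φ := fun t => t • Pi.single i 1) (by fun_prop)]
  simp [hline]

lemma integral_sum_mul_pder_eq_zero (hf : ZPer f) (hd : ContDiff ℝ 1 f)
    {F : Fin d → (Fin d → ℝ) → ℝ} (hFp : ∀ i, ZPer (F i)) (hF : ∀ i, ContDiff ℝ 1 (F i))
    (hdiv : ∀ x, ∑ i, pder i (F i) x = 0) :
    ∫ x in cube d, ∑ i, F i x * pder i f x = 0 := by
  have hprod (x : Fin d → ℝ) :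
      ∑ i, F i x * pder i f x = ∑ i, pder i (fun z => F i z * f z) x := by
    simp only [pder_mul _ ((hF _).differentiable_one x) (hd.differentiable_one x),
      Finset.sum_add_distrib, ← Finset.mul_sum, hdiv, mul_zero, add_zero]
  have hper (i : Fin d) : ZPer fun z => F i z * f z := fun x k =>
    congrArg₂ (· * ·) (hFp i x k) (hf x k)
  simp only [hprod]
  rw [integral_finsetSum _ fun i _ => integrableOn_cube (continuous_pder ((hF i).mul hd) i)]
  exact Finset.sum_eq_zero fun i _ => (hper i).integral_pder_eq_zero ((hF i).mul hd) i

end ZPer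

lemma SmoothV.exists_abs_le {d : ℕ} {V : (Fin d → ℝ) → (Fin d → ℝ) → ℝ} (hV : SmoothV V) :
    ∃ C, ∀ x y, |V x y| ≤ C := by
  obtain ⟨hsmooth, hper₁, hper₂⟩ := hV
  obtain ⟨C, hC⟩ := (isCompact_Icc.prod isCompact_Icc).exists_bound_of_continuousOn
    (s := Set.Icc (0 : Fin d → ℝ) 1 ×ˢ Set.Icc (0 : Fin d → ℝ) 1) hsmooth.continuous.continuousOn
  refine ⟨C, fun x y => ?_⟩
  obtain ⟨x', hx', k, rfl⟩ := exists_mem_Icc_add_intCast_eq x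
  obtain ⟨y', hy', l, rfl⟩ := exists_mem_Icc_add_intCast_eq y
  exact (congrArg abs ((hper₁ _ x' k).trans (hper₂ x' y' l))).trans_le (hC (x', y') ⟨hx', hy'⟩)

lemma SmoothV.mem_Icc_infV_supV {d : ℕ} {V : (Fin d → ℝ) → (Fin d → ℝ) → ℝ} (hV : SmoothV V)
    (x y : Fin d → ℝ) : V x y ∈ Set.Icc (infV V) (supV V) := by
  obtain ⟨C, hC⟩ := hV.exists_abs_le
  refine ⟨ciInf_le (f := fun q : (Fin d → ℝ) × (Fin d → ℝ) => V q.1 q.2) ⟨-C, ?_⟩ (x, y),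
    le_ciSup (f := fun q : (Fin d → ℝ) × (Fin d → ℝ) => V q.1 q.2) ⟨C, ?_⟩ (x, y)⟩
  · rintro _ ⟨q, rfl⟩
    exact (abs_le.1 (hC q.1 q.2)).1
  · rintro _ ⟨q, rfl⟩
    exact (abs_le.1 (hC q.1 q.2)).2

section Poincare

variable {d : ℕ} {f : (Fin d → ℝ) → ℝ}

lemma abs_add_sub_le_integral_sum_abs_pder (hd : ContDiff ℝ 1 f) (x : Fin d → ℝ) {z : Fin d → ℝ}
    (hz : z ∈ cube d) :
    |f (x + z) - f x| ≤ ∫ t in Set.Ioc (0 : ℝ) 1, ∑ i, |pder i f (x + t • z)| := by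
  have hpder := continuous_pder hd
  rw [← integral_fderiv_segment hd]
  refine abs_integral_le_integral_abs.trans
    (integral_mono_of_nonneg (.of_forall fun _ => abs_nonneg _) ?_ (.of_forall fun t => ?_))
  · exact (Continuous.integrableOn_Icc (by fun_prop)).mono_set Set.Ioc_subset_Icc_self
  · beta_reduce
    rw [fderiv_apply_eq_sum_mul_pder]
    refine (Finset.abs_sum_le_sum_abs _ _).trans (Finset.sum_le_sum fun i _ => ?_)
    rw [abs_mul, abs_of_nonneg (hz i trivial).1]
    exact mul_le_of_le_one_left (abs_nonneg _) (hz i trivial).2.le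

-- As `f` has mean zero over every translate of the cube, `-f x` is the mean of `f (x + z) - f x`.
lemma ZPer.abs_le_integral_sum_abs_pder (hf : ZPer f) (hd : ContDiff ℝ 1 f)
    (hmean : ∫ x in cube d, f x = 0) (x : Fin d → ℝ) :
    |f x| ≤ ∫ p, ∑ i, |pder i f (x + p.2 • p.1)|
      ∂(volume.restrict (cube d)).prod (volume.restrict (Set.Ioc (0 : ℝ) 1)) := by
  have hfc := hd.continuous
  have hint : Integrable (fun p : (Fin d → ℝ) × ℝ => ∑ i, |pder i f (x + p.2 • p.1)|)
      ((volume.restrict (cube d)).prod (volume.restrict (Set.Ioc (0 : ℝ) 1))) :=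
    (ZPer.comp_sum hf.pder abs).integrable_comp
      (continuous_finsetSum _ fun i _ => (continuous_pder hd i).abs) (by fun_prop)
  have hrepr : -f x = ∫ z in cube d, (f (x + z) - f x) := by
    rw [integral_sub (integrableOn_cube (by fun_prop)) (integrableOn_cube (by fun_prop))]
    simp only [add_comm x, hf.setIntegral_cube_add, hmean]
    simp
  rw [← abs_neg, hrepr, integral_prod _ hint]
  refine abs_integral_le_integral_abs.trans
    (setIntegral_mono_on (integrableOn_cube (by fun_prop)) hint.integral_prod_left
      (measurableSet_cube d) fun z hz => abs_add_sub_le_integral_sum_abs_pder hd x hz)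

lemma ZPer.integral_convex_abs_le_integral_sum_abs_pder (hf : ZPer f) (hd : ContDiff ℝ 1 f)
    (hmean : ∫ x in cube d, f x = 0) {g : ℝ → ℝ} (hg : ConvexOn ℝ (Set.Ici 0) g)
    (hgc : ContinuousOn g (Set.Ici 0)) (hgm : MonotoneOn g (Set.Ici 0)) :
    ∫ x in cube d, g |f x| ≤ ∫ x in cube d, g (∑ i, |pder i f x|) :=
  (ZPer.comp_sum hf.pder abs).integral_convex_le_of_le_integral_add
    (continuous_finsetSum _ fun i _ => (continuous_pder hd i).abs)
    (fun x => Finset.sum_nonneg fun i _ => abs_nonneg _) (by fun_prop) hg hgc hgm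
    hd.continuous.abs (fun x => abs_nonneg (f x)) (hf.abs_le_integral_sum_abs_pder hd hmean)

end Poincare

lemma integral_abs_rpow_le_mul_integral_exp_abs {α : Type*} [MeasurableSpace α] {μ : Measure α}
    {f : α → ℝ} (hf : Integrable (fun x => Real.exp |f x|) μ) {q : ℝ} (hq : 0 ≤ q) :
    ∫ x, |f x| ^ q ∂μ ≤ q ^ q * ∫ x, Real.exp |f x| ∂μ := by
  rw [← integral_const_mul]
  refine integral_mono_of_nonneg (.of_forall fun x => by positivity) (hf.const_mul _)
    (.of_forall fun x => ?_)
  simpa using ProbabilityTheory.rpow_abs_le_mul_exp_abs (f x) hq one_ne_zero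

/-- `(u, m, H)` is a classical solution on `𝕋^d` of the stationary mean-field game system with
an arbitrary potential `W`; the oscillating system is the case `W x = V x (ε⁻¹ • x)`. As in
`SolvesMFG`, functions on `𝕋^d` are encoded as `ℤ^d`-periodic functions on `ℝ^d`. -/
structure IsMFGSolution {d : ℕ} (P : Fin d → ℝ) (W u m : (Fin d → ℝ) → ℝ) (H : ℝ) : Prop where
  contDiff_u : ContDiff ℝ 2 u
  zPer_u : ZPer u
  contDiff_m : ContDiff ℝ 1 m
  zPer_m : ZPer m
  m_pos (x : Fin d → ℝ) : 0 < m x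
  hamilton_jacobi (x : Fin d → ℝ) :
    (∑ i, (P i + pder i u x) ^ 2) / 2 + W x = Real.log (m x) + H
  continuity_eq (x : Fin d → ℝ) : ∑ i, pder i (fun z => m z * (P i + pder i u z)) x = 0
  integral_u : ∫ x in cube d, u x = 0
  integral_m : ∫ x in cube d, m x = 1

lemma SolvesMFG.isMFGSolution {d : ℕ} {P : Fin d → ℝ} {V : (Fin d → ℝ) → (Fin d → ℝ) → ℝ} {ε : ℝ}
    {u m : (Fin d → ℝ) → ℝ} {H : ℝ} (h : SolvesMFG P V ε u m H) :
    IsMFGSolution P (fun x => V x (ε⁻¹ • x)) u m H :=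
  let ⟨hu, hup, hm, hmp, hpos, hHJ, hdiv, hu0, hm1⟩ := h
  ⟨contDiff_infty.1 hu 2, hup, contDiff_infty.1 hm 1, hmp, hpos, hHJ, hdiv, hu0, hm1⟩

/-- The constant `K` of the gradient estimate `exp (∑ i, |∂ᵢu|) ≤ K m` for solutions of the
mean-field game system whose potential takes values in `[a, b]`. -/
def gradientConst {d : ℕ} (P : Fin d → ℝ) (a b : ℝ) : ℝ :=
  Real.exp (∑ i, (|P i| + 1 / 2) + ((∑ i, P i ^ 2) / 2 + b - a))

namespace IsMFGSolution

variable {d : ℕ} {P : Fin d → ℝ} {W u m : (Fin d → ℝ) → ℝ} {H a b : ℝ}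

lemma continuous_m (h : IsMFGSolution P W u m H) : Continuous m :=
  h.contDiff_m.continuous

lemma continuous_pder_u (h : IsMFGSolution P W u m H) (i : Fin d) : Continuous (pder i u) :=
  continuous_pder (h.contDiff_u.of_le one_le_two) i

lemma continuous_log_m (h : IsMFGSolution P W u m H) : Continuous fun x => Real.log (m x) :=
  h.continuous_m.log fun x => (h.m_pos x).ne'

lemma integral_flux_mul_pder_eq_zero (h : IsMFGSolution P W u m H) :
    ∫ x in cube d, ∑ i, m x * (P i + pder i u x) * pder i u x = 0 :=
  h.zPer_u.integral_sum_mul_pder_eq_zero (h.contDiff_u.of_le one_le_two)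
    (fun i x k => congrArg₂ (fun s t => s * (P i + t)) (h.zPer_m x k) (h.zPer_u.pder i x k))
    (fun i => h.contDiff_m.mul
      (contDiff_const.add (contDiff_pder h.contDiff_u one_add_one_eq_two.le i)))
    h.continuity_eq

lemma integral_kinetic_le (h : IsMFGSolution P W u m H) :
    ∫ x in cube d, m x * ((∑ i, (P i + pder i u x) ^ 2) / 2) ≤ (∑ i, P i ^ 2) / 2 := by
  have hm := h.continuous_m
  have hDu := h.continuous_pder_u
  -- `|P + p|² / 2 - (P + p) · p = |P|² / 2 - |p|² / 2` for `p = ∇u x`.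
  have hpointwise (x : Fin d → ℝ) : m x * ((∑ i, (P i + pder i u x) ^ 2) / 2) ≤
      (∑ i, m x * (P i + pder i u x) * pder i u x) + m x * ((∑ i, P i ^ 2) / 2) := by
    simp only [mul_assoc, ← Finset.mul_sum, ← mul_add, Finset.sum_div, ← Finset.sum_add_distrib]
    refine mul_le_mul_of_nonneg_left (Finset.sum_le_sum fun i _ => ?_) (h.m_pos x).le
    linarith [sq_nonneg (pder i u x)]
  calc ∫ x in cube d, m x * ((∑ i, (P i + pder i u x) ^ 2) / 2)
      ≤ ∫ x in cube d,
          ((∑ i, m x * (P i + pder i u x) * pder i u x) + m x * ((∑ i, P i ^ 2) / 2)) :=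
        integral_mono (integrableOn_cube (by fun_prop)) (integrableOn_cube (by fun_prop))
          hpointwise
    _ = (∑ i, P i ^ 2) / 2 := by
        rw [integral_add (integrableOn_cube (by fun_prop)) (integrableOn_cube (by fun_prop)),
          h.integral_flux_mul_pder_eq_zero, integral_mul_const, h.integral_m, zero_add, one_mul]

lemma integral_log_nonpos (h : IsMFGSolution P W u m H) :
    ∫ x in cube d, Real.log (m x) ≤ 0 := by
  have hm := h.continuous_m
  calc ∫ x in cube d, Real.log (m x)
      ≤ ∫ x in cube d, (m x - 1) :=
        integral_mono (integrableOn_cube h.continuous_log_m) (integrableOn_cube (by fun_prop))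
          fun x => Real.log_le_sub_one_of_pos (h.m_pos x)
    _ = 0 := by
        rw [integral_sub (integrableOn_cube hm) (integrableOn_cube continuous_const), h.integral_m]
        simp

lemma entropy_nonneg (h : IsMFGSolution P W u m H) :
    0 ≤ ∫ x in cube d, m x * Real.log (m x) := by
  have hm := h.continuous_m
  calc 0 = ∫ x in cube d, (m x - 1) := by
        rw [integral_sub (integrableOn_cube hm) (integrableOn_cube continuous_const), h.integral_m]
        simp
    _ ≤ ∫ x in cube d, m x * Real.log (m x) :=
        integral_mono (integrableOn_cube (by fun_prop))
          (integrableOn_cube (hm.mul h.continuous_log_m))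
          fun x => Real.self_sub_one_le_mul_log (h.m_pos x).le

lemma le_effectiveHamiltonian (h : IsMFGSolution P W u m H) (ha : ∀ x, a ≤ W x) : a ≤ H := by
  have hpointwise (x : Fin d → ℝ) : a - H ≤ Real.log (m x) := by
    have : 0 ≤ (∑ i, (P i + pder i u x) ^ 2) / 2 := by positivity
    linarith [h.hamilton_jacobi x, ha x]
  have hmono : ∫ _ in cube d, (a - H) ≤ ∫ x in cube d, Real.log (m x) :=
    integral_mono (integrable_const _) (integrableOn_cube h.continuous_log_m) hpointwise
  have hconst : ∫ _ in cube d, (a - H) = a - H := by simp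
  linarith [h.integral_log_nonpos]

lemma entropy_le_sub_effectiveHamiltonian (h : IsMFGSolution P W u m H) (hb : ∀ x, W x ≤ b) :
    ∫ x in cube d, m x * Real.log (m x) ≤ (∑ i, P i ^ 2) / 2 + b - H := by
  have hm := h.continuous_m
  have hDu := h.continuous_pder_u
  calc ∫ x in cube d, m x * Real.log (m x)
      ≤ ∫ x in cube d, (m x * ((∑ i, (P i + pder i u x) ^ 2) / 2) + m x * (b - H)) := by
        refine integral_mono (integrableOn_cube (hm.mul h.continuous_log_m))
          (integrableOn_cube (by fun_prop)) fun x => ?_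
        beta_reduce
        rw [← mul_add]
        exact mul_le_mul_of_nonneg_left (by linarith [h.hamilton_jacobi x, hb x]) (h.m_pos x).le
    _ = (∫ x in cube d, m x * ((∑ i, (P i + pder i u x) ^ 2) / 2)) + (b - H) := by
        rw [integral_add (integrableOn_cube (by fun_prop)) (integrableOn_cube (by fun_prop)),
          integral_mul_const, h.integral_m, one_mul]
    _ ≤ (∑ i, P i ^ 2) / 2 + b - H := by linarith [h.integral_kinetic_le]

lemma entropy_le (h : IsMFGSolution P W u m H) (hW : ∀ x, W x ∈ Set.Icc a b) :
    ∫ x in cube d, m x * Real.log (m x) ≤ (∑ i, P i ^ 2) / 2 + b - a := by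
  linarith [h.entropy_le_sub_effectiveHamiltonian fun x => (hW x).2,
    h.le_effectiveHamiltonian fun x => (hW x).1]

lemma effectiveHamiltonian_le (h : IsMFGSolution P W u m H) (hb : ∀ x, W x ≤ b) :
    H ≤ (∑ i, P i ^ 2) / 2 + b := by
  linarith [h.entropy_nonneg, h.entropy_le_sub_effectiveHamiltonian hb]

lemma kinetic_le_log_add (h : IsMFGSolution P W u m H) (hW : ∀ x, W x ∈ Set.Icc a b)
    (x : Fin d → ℝ) :
    (∑ i, (P i + pder i u x) ^ 2) / 2 ≤ Real.log (m x) + ((∑ i, P i ^ 2) / 2 + b - a) := by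
  linarith [h.hamilton_jacobi x, (hW x).1, h.effectiveHamiltonian_le fun y => (hW y).2]

lemma one_div_exp_le_m (h : IsMFGSolution P W u m H) (hW : ∀ x, W x ∈ Set.Icc a b)
    (x : Fin d → ℝ) : 1 / Real.exp ((∑ i, P i ^ 2) / 2 + b - a) ≤ m x := by
  rw [one_div, ← Real.exp_neg, ← Real.le_log_iff_exp_le (h.m_pos x)]
  have : 0 ≤ (∑ i, (P i + pder i u x) ^ 2) / 2 := by positivity
  linarith [h.kinetic_le_log_add hW x]

lemma exists_pos_m_le (h : IsMFGSolution P W u m H) : ∃ C > 0, ∀ x, m x ≤ C := by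
  obtain ⟨C, hC⟩ := h.zPer_m.exists_abs_le h.continuous_m
  have hmC (x : Fin d → ℝ) : m x ≤ C := (le_abs_self _).trans (hC x)
  exact ⟨C, (h.m_pos 0).trans_le (hmC 0), hmC⟩

lemma exp_sum_abs_pder_le (h : IsMFGSolution P W u m H) (hW : ∀ x, W x ∈ Set.Icc a b)
    (x : Fin d → ℝ) : Real.exp (∑ i, |pder i u x|) ≤ gradientConst P a b * m x := by
  have hcoord (i : Fin d) :
      |pder i u x| ≤ |P i| + 1 / 2 + (P i + pder i u x) ^ 2 / 2 := by
    have htriangle : |pder i u x| ≤ |P i + pder i u x| + |P i| := by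
      simpa using abs_sub (P i + pder i u x) (P i)
    nlinarith [sq_abs (P i + pder i u x), sq_nonneg (|P i + pder i u x| - 1)]
  have hsum := Finset.sum_le_sum fun i (_ : i ∈ Finset.univ) => hcoord i
  rw [Finset.sum_add_distrib, ← Finset.sum_div] at hsum
  rw [gradientConst, ← Real.exp_log (h.m_pos x), ← Real.exp_add, Real.exp_le_exp]
  linarith [h.kinetic_le_log_add hW x]

lemma integral_exp_sum_abs_pder_le (h : IsMFGSolution P W u m H)
    (hW : ∀ x, W x ∈ Set.Icc a b) :
    ∫ x in cube d, Real.exp (∑ i, |pder i u x|) ≤ gradientConst P a b := by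
  have hm := h.continuous_m
  have hDu := h.continuous_pder_u
  calc ∫ x in cube d, Real.exp (∑ i, |pder i u x|)
      ≤ ∫ x in cube d, gradientConst P a b * m x :=
        integral_mono (integrableOn_cube (by fun_prop)) (integrableOn_cube (by fun_prop))
          (h.exp_sum_abs_pder_le hW)
    _ = gradientConst P a b := by rw [integral_const_mul, h.integral_m, mul_one]

lemma integral_exp_abs_pder_le (h : IsMFGSolution P W u m H) (hW : ∀ x, W x ∈ Set.Icc a b)
    (i : Fin d) : ∫ x in cube d, Real.exp |pder i u x| ≤ gradientConst P a b := by
  have hDu := h.continuous_pder_u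
  refine (integral_mono (integrableOn_cube (by fun_prop)) (integrableOn_cube (by fun_prop))
    fun x => Real.exp_le_exp.2 ?_).trans (h.integral_exp_sum_abs_pder_le hW)
  exact Finset.single_le_sum (f := fun i => |pder i u x|) (fun j _ => abs_nonneg _)
    (Finset.mem_univ i)

lemma integral_exp_abs_le (h : IsMFGSolution P W u m H) (hW : ∀ x, W x ∈ Set.Icc a b) :
    ∫ x in cube d, Real.exp |u x| ≤ gradientConst P a b :=
  (h.zPer_u.integral_convex_abs_le_integral_sum_abs_pder (h.contDiff_u.of_le one_le_two)
    h.integral_u (convexOn_exp.subset (Set.subset_univ _) (convex_Ici 0))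
    Real.continuous_exp.continuousOn (Real.exp_monotone.monotoneOn _)).trans
    (h.integral_exp_sum_abs_pder_le hW)

lemma integral_abs_rpow_add_sum_le (h : IsMFGSolution P W u m H) (hW : ∀ x, W x ∈ Set.Icc a b)
    {q : ℝ} (hq : 0 ≤ q) :
    (∫ x in cube d, |u x| ^ q) + ∑ i, ∫ x in cube d, |pder i u x| ^ q ≤
      (1 + d) * (q ^ q * gradientConst P a b) := by
  have hrpow {f : (Fin d → ℝ) → ℝ} (hf : Continuous f)
      (hexp : ∫ x in cube d, Real.exp |f x| ≤ gradientConst P a b) :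
      ∫ x in cube d, |f x| ^ q ≤ q ^ q * gradientConst P a b :=
    (integral_abs_rpow_le_mul_integral_exp_abs (integrableOn_cube (by fun_prop)) hq).trans
      (mul_le_mul_of_nonneg_left hexp (by positivity))
  have hu := hrpow h.contDiff_u.continuous (h.integral_exp_abs_le hW)
  have hDu := Finset.sum_le_card_nsmul Finset.univ _ _ fun i _ =>
    hrpow (h.continuous_pder_u i) (h.integral_exp_abs_pder_le hW i)
  rw [Finset.card_fin, nsmul_eq_mul] at hDu
  linarith

end IsMFGSolution

theorem stmt4_general {d : ℕ} {ι : Type*} (P : Fin d → ℝ) {a b q : ℝ} (hq : 0 < q)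
    (W u m : ι → (Fin d → ℝ) → ℝ) (H : ι → ℝ) (hW : ∀ n x, W n x ∈ Set.Icc a b)
    (hsol : ∀ n, IsMFGSolution P (W n) (u n) (m n) (H n)) :
    (∃ Cq > 0, ∀ n,
        ((∫ x in cube d, |u n x| ^ q) + ∑ i, ∫ x in cube d, |pder i (u n) x| ^ q) ^ (1 / q)
          ≤ Cq) ∧
    (∃ C > 0, (∀ n x, 1 / C ≤ m n x) ∧ (∀ n, ∃ Cε > 0, ∀ x, m n x ≤ Cε)) ∧
    (∀ n, (∫ x in cube d, m n x * Real.log (m n x)) ≤ (∑ i, (P i) ^ 2) / 2 + b - a) := by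
  have hK : 0 < gradientConst P a b := Real.exp_pos _
  refine ⟨⟨((1 + d) * (q ^ q * gradientConst P a b)) ^ (1 / q), by positivity, fun n => ?_⟩,
    ⟨_, Real.exp_pos _, fun n => (hsol n).one_div_exp_le_m (hW n),
      fun n => (hsol n).exists_pos_m_le⟩,
    fun n => (hsol n).entropy_le (hW n)⟩
  exact Real.rpow_le_rpow (by positivity) ((hsol n).integral_abs_rpow_add_sum_le (hW n) hq.le)
    (by positivity)

/-- uniform bounds for the solutions `(u_ε, m_ε, H̄_ε)` of the oscillating
MFG system: a uniform `W^{1,q}(𝕋^d)` bound on `u_ε`, a uniform positive lower bound and an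
`ε`-dependent upper bound on `m_ε`, and a uniform bound on `∫ m_ε ln m_ε`. -/
theorem stmt4 {d : ℕ} (P : Fin d → ℝ) (V : (Fin d → ℝ) → (Fin d → ℝ) → ℝ)
    (hV : SmoothV V) (q : ℝ) (hq : 1 ≤ q)
    (ε : ℕ → ℝ) (hεpos : ∀ n, 0 < ε n) (hε0 : Tendsto ε atTop (𝓝 0))
    (u m : ℕ → (Fin d → ℝ) → ℝ) (H : ℕ → ℝ)
    (hsol : ∀ n, SolvesMFG P V (ε n) (u n) (m n) (H n)) :
    (∃ Cq > 0, ∀ n,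
        ((∫ x in cube d, |u n x| ^ q) + ∑ i, ∫ x in cube d, |pder i (u n) x| ^ q) ^ (1 / q)
          ≤ Cq) ∧
    (∃ C > 0, (∀ n x, 1 / C ≤ m n x) ∧ (∀ n, ∃ Cε > 0, ∀ x, m n x ≤ Cε)) ∧
    (∀ n, (∫ x in cube d, m n x * Real.log (m n x)) ≤
        (∑ i, (P i) ^ 2) / 2 + supV V - infV V) :=
  stmt4_general P (zero_lt_one.trans_le hq) _ u m H
    (fun _ _ => hV.mem_Icc_infV_supV _ _) fun n => (hsol n).isMFGSolution
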